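/- In the setting of the shell-summation lemmas, for every p ∈ {1,…,p̃}: ∑_{p'=p+1}^{p̃} Ñ_{p'} ≤ ᾱ·∑_{j=p+1}^{p̃} N_j + χ·Ñ_p. -/

import Mathlib

/-!
Exchanging the two sums reduces the inequality to a bound on each column sum
`∑_{p' > p} α_{|p' - j|}`. If `j > p`, each distance occurs at most once on either side of `j`, so
the column sum is at most `ᾱ`. If `j ≤ p`, then `|p' - j| = (p' - p) + |p - j|`, so the column sum
is part of the tail of `α` beyond `|p - j|`, which is at most `χ α_{|p - j|}` by hypothesis.
-/

section OrderedAddMonoid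

variable {M : Type*} [AddCommMonoid M] [PartialOrder M] [IsOrderedAddMonoid M]
  [TopologicalSpace M] [OrderClosedTopology M]

theorem sum_comp_le_tsum_of_injOn {ι κ : Type*} {f : κ → M} (hf : Summable f)
    (hf_nonneg : ∀ k, 0 ≤ f k) {s : Finset ι} {e : ι → κ} (he : Set.InjOn e s) :
    ∑ i ∈ s, f (e i) ≤ ∑' k, f k := by
  classical
  rw [← Finset.sum_image (f := f) he]
  exact hf.sum_le_tsum _ fun k _ => hf_nonneg k

theorem sum_dist_le_tsum_of_forall_le {α : ℕ → M} (hα : Summable α) (hα_nonneg : ∀ k, 0 ≤ α k)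
    {j : ℕ} {s : Finset ℕ} (hs : ∀ i ∈ s, i ≤ j) : ∑ i ∈ s, α (Nat.dist i j) ≤ ∑' k, α k := by
  refine sum_comp_le_tsum_of_injOn hα hα_nonneg fun a ha b hb hab => ?_
  have ha_le := hs a ha
  have hb_le := hs b hb
  rw [Nat.dist_eq_sub_of_le ha_le, Nat.dist_eq_sub_of_le hb_le] at hab
  omega

end OrderedAddMonoid

section OrderedAddGroup

variable {M : Type*} [AddCommGroup M] [PartialOrder M] [IsOrderedAddMonoid M]
  [TopologicalSpace M] [IsTopologicalAddGroup M] [OrderClosedTopology M] {α : ℕ → M}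

theorem sum_dist_le_tsum_add_dist (hα : Summable α) (hα_nonneg : ∀ k, 0 ≤ α k) {j p : ℕ}
    (hjp : j ≤ p) {s : Finset ℕ} (hs : ∀ i ∈ s, p < i) :
    ∑ i ∈ s, α (Nat.dist i j) ≤ ∑' q, α (q + 1 + Nat.dist p j) := by
  have dist_eq : ∀ i ∈ s, Nat.dist i j = i - (p + 1) + 1 + Nat.dist p j := fun i hi => by
    have hpi := hs i hi
    rw [Nat.dist_eq_sub_of_le_right hjp, Nat.dist_eq_sub_of_le_right (hjp.trans hpi.le)]
    omega
  have tail_summable : Summable fun q => α (q + 1 + Nat.dist p j) := by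
    simpa only [add_assoc] using (summable_nat_add_iff (1 + Nat.dist p j)).2 hα
  have shift_injOn : Set.InjOn (fun i => i - (p + 1)) s := fun a ha b hb hab =>
    (tsub_left_inj (hs a ha) (hs b hb)).1 hab
  calc ∑ i ∈ s, α (Nat.dist i j) = ∑ i ∈ s, α (i - (p + 1) + 1 + Nat.dist p j) :=
        Finset.sum_congr rfl fun i hi => by rw [dist_eq i hi]
    _ ≤ ∑' q, α (q + 1 + Nat.dist p j) :=
        sum_comp_le_tsum_of_injOn tail_summable (fun _ => hα_nonneg _) shift_injOn

theorem sum_dist_le_add_two_nsmul_tsum (hα : Summable α) (hα_nonneg : ∀ k, 0 ≤ α k) (j : ℕ)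
    (s : Finset ℕ) : ∑ i ∈ s, α (Nat.dist i j) ≤ α 0 + 2 • ∑' q, α (q + 1) := by
  have above : ∑ i ∈ s with j < i, α (Nat.dist i j) ≤ ∑' q, α (q + 1) := by
    simpa only [Nat.dist_self, add_zero] using
      sum_dist_le_tsum_add_dist hα hα_nonneg le_rfl fun i hi => (Finset.mem_filter.1 hi).2
  have upto : ∑ i ∈ s with ¬ j < i, α (Nat.dist i j) ≤ α 0 + ∑' q, α (q + 1) := by
    rw [← hα.tsum_eq_zero_add]
    exact sum_dist_le_tsum_of_forall_le hα hα_nonneg fun i hi =>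
      not_lt.1 (Finset.mem_filter.1 hi).2
  calc ∑ i ∈ s, α (Nat.dist i j)
      = ∑ i ∈ s with j < i, α (Nat.dist i j) + ∑ i ∈ s with ¬ j < i, α (Nat.dist i j) :=
        (Finset.sum_filter_add_sum_filter_not s _ _).symm
    _ ≤ ∑' q, α (q + 1) + (α 0 + ∑' q, α (q + 1)) := add_le_add above upto
    _ = α 0 + 2 • ∑' q, α (q + 1) := by abel

end OrderedAddGroup

theorem stmt_10_general {R : Type*} [Ring R] [PartialOrder R] [IsOrderedRing R]
    [TopologicalSpace R] [OrderClosedTopology R] [IsTopologicalAddGroup R] {α : ℕ → R}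
    (hα : Summable α) (hα_nonneg : ∀ k, 0 ≤ α k) {χ : R}
    (hχ : ∀ k, ∑' q, α (q + 1 + k) ≤ χ * α k) (s : Finset ℕ) {N : ℕ → R}
    (hN : ∀ j ∈ s, 0 ≤ N j) (p : ℕ) :
    ∑ i ∈ s with p < i, ∑ j ∈ s, α (Nat.dist i j) * N j ≤
      (α 0 + 2 * ∑' q, α (q + 1)) * ∑ j ∈ s with p < j, N j +
        χ * ∑ j ∈ s, α (Nat.dist p j) * N j := by
  set A := α 0 + 2 * ∑' q, α (q + 1)
  have χ_mul_nonneg (k : ℕ) : 0 ≤ χ * α k := (tsum_nonneg fun _ => hα_nonneg _).trans (hχ k)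
  have column_le (j : ℕ) : ∑ i ∈ s with p < i, α (Nat.dist i j) ≤
      (if p < j then A else 0) + χ * α (Nat.dist p j) := by
    split_ifs with hpj
    · refine le_add_of_le_of_nonneg ?_ (χ_mul_nonneg _)
      simpa only [nsmul_eq_mul, Nat.cast_ofNat] using
        sum_dist_le_add_two_nsmul_tsum hα hα_nonneg j {i ∈ s | p < i}
    · rw [zero_add]
      exact (sum_dist_le_tsum_add_dist hα hα_nonneg (not_lt.1 hpj)
        fun i hi => (Finset.mem_filter.1 hi).2).trans (hχ _)
  calc ∑ i ∈ s with p < i, ∑ j ∈ s, α (Nat.dist i j) * N j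
      = ∑ j ∈ s, (∑ i ∈ s with p < i, α (Nat.dist i j)) * N j := by
        rw [Finset.sum_comm]
        simp only [Finset.sum_mul]
    _ ≤ ∑ j ∈ s, ((if p < j then A else 0) + χ * α (Nat.dist p j)) * N j :=
        Finset.sum_le_sum fun j hj => mul_le_mul_of_nonneg_right (column_le j) (hN j hj)
    _ = A * ∑ j ∈ s with p < j, N j + χ * ∑ j ∈ s, α (Nat.dist p j) * N j := by
        simp only [add_mul, ite_mul, zero_mul, mul_assoc, Finset.sum_add_distrib,
          Finset.sum_filter, Finset.mul_sum, mul_ite, mul_zero]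

/-- key inequality inside the proof of Lemma 8 of the paper.
In the shell-summation setting (see Statement 7), for every `p ∈ {1,…,ptil}`:
`∑_{p'=p+1}^{ptil} Ñ_{p'} ≤ abar ∑_{j=p+1}^{ptil} N_j + χ Ñ_p`. -/
theorem stmt_10 (ptil : ℕ) (hptil : 1 ≤ ptil) (N : ℕ → ℝ) (hN : ∀ j, 0 ≤ N j)
    (α : ℕ → ℝ) (hα : ∀ j, 0 < α j) (hsum : Summable α)
    (abar χ : ℝ) (habar : abar = α 0 + 2 * ∑' j : ℕ, α (j + 1))
    (hχ : 0 ≤ χ) (hχα : ∀ j : ℕ, ∑' q : ℕ, α (q + 1 + j) ≤ χ * α j) :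
    ∀ p ∈ Finset.Icc 1 ptil,
      (∑ p' ∈ Finset.Icc (p + 1) ptil, ∑ j ∈ Finset.Icc 1 ptil, α (Nat.dist p' j) * N j) ≤
        abar * (∑ j ∈ Finset.Icc (p + 1) ptil, N j) +
          χ * ∑ j ∈ Finset.Icc 1 ptil, α (Nat.dist p j) * N j := by
  intro p _
  have Icc_succ_eq : Finset.Icc (p + 1) ptil = {j ∈ Finset.Icc 1 ptil | p < j} := by grind
  rw [habar, Icc_succ_eq]
  exact stmt_10_general hsum (fun k => (hα k).le) hχα _ (fun j _ => hN j) p
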